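/- arXiv:2007.05071 — 2 statements merged into one kernel-verified Lean document; each statement's English description precedes it below -/
import Mathlib

section
/- Let N be a positive integer, τ ∈ (0,1), ζ > 0 and q > 0 with ζ > q²/N. Define ρ*_N := log₂( 1 + (ζ − q²/N) / (τ + √(τ² + τ·(1 − q²/(N·ζ))·(q²/N − τ))) ). Then: (i) the radicand τ² + τ(1 − q²/(Nζ))(q²/N − τ) is nonnegative and ρ*_N > 0; and (ii) for every ρ > 0, setting α = 1/(2^ρ − 1), the inequality √N·(α·ζ − τ)/√(α²·ζ + τ) > q holds if and only if ρ < ρ*_N. -/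
/-!
Put `c = q² / N`. Since `q ≥ 0`, the error target says `√(c (α² ζ + τ)) < α ζ - τ`. Squaring gives
a quadratic inequality in `α`, and completing the square turns it into
`(α (ζ - c) - τ)² > D` with `D` the radicand in `ρ*_N`. The sign condition `α ζ - τ > 0` lost by
squaring selects the larger root, so the target says `α > (τ + √D) / (ζ - c)`. As
`α = 1 / (2 ^ ρ - 1)` decreases in `ρ`, this is an upper bound on `ρ`, namely `ρ*_N`.
-/

section ErrorTarget

variable {τ ζ c : ℝ}

/-- The radicand in the formula for `ρ*_N`, with `c = q² / N`. It is the reduced discriminant of the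
quadratic `(a ζ - τ)² - c (a² ζ + τ)` in `a`, divided by `ζ²`. -/
noncomputable def thresholdDiscrim (τ ζ c : ℝ) : ℝ :=
  τ ^ 2 + τ * (1 - c / ζ) * (c - τ)

/-- The critical spectral efficiency `ρ*_N`, with `c = q² / N` and with the logarithm taken to an
arbitrary base `b`; the case `b = 2` measures it in bits. -/
noncomputable def criticalSpectralEfficiency (b τ ζ c : ℝ) : ℝ :=
  Real.logb b (1 + (ζ - c) / (τ + √(thresholdDiscrim τ ζ c)))

theorem thresholdDiscrim_eq (hζ : ζ ≠ 0) :
    thresholdDiscrim τ ζ c = c * τ * (ζ - c + τ) / ζ := by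
  unfold thresholdDiscrim
  field_simp
  ring

theorem thresholdDiscrim_nonneg (hτ : 0 ≤ τ) (hc : 0 ≤ c) (hcζ : c < ζ) :
    0 ≤ thresholdDiscrim τ ζ c := by
  have hζ : 0 < ζ := hc.trans_lt hcζ
  rw [thresholdDiscrim_eq hζ.ne']
  exact div_nonneg
    (mul_nonneg (mul_nonneg hc hτ) (add_nonneg (sub_nonneg.mpr hcζ.le) hτ)) hζ.le

theorem criticalSpectralEfficiency_pos {b : ℝ} (hb : 1 < b) (hτ : 0 < τ) (hcζ : c < ζ) :
    0 < criticalSpectralEfficiency b τ ζ c :=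
  Real.logb_pos hb (lt_add_of_pos_right 1 (div_pos (sub_pos.mpr hcζ) (by positivity)))

theorem sq_sub_thresholdDiscrim (hζ : ζ ≠ 0) (a : ℝ) :
    (a * (ζ - c) - τ) ^ 2 - thresholdDiscrim τ ζ c =
      (ζ - c) / ζ * ((a * ζ - τ) ^ 2 - c * (a ^ 2 * ζ + τ)) := by
  unfold thresholdDiscrim
  field_simp
  ring

theorem thresholdDiscrim_lt_sq_iff (hζ : 0 < ζ) (hcζ : c < ζ) (a : ℝ) :
    thresholdDiscrim τ ζ c < (a * (ζ - c) - τ) ^ 2 ↔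
      c * (a ^ 2 * ζ + τ) < (a * ζ - τ) ^ 2 := by
  rw [← sub_pos, sq_sub_thresholdDiscrim hζ.ne',
    mul_pos_iff_of_pos_left (div_pos (sub_pos.mpr hcζ) hζ), sub_pos]

theorem mul_lt_sub_of_mul_lt_sub_sq {a : ℝ} (hτ : 0 ≤ τ) (hc : 0 ≤ c) (ha : 0 ≤ a)
    (hpos : 0 < a * ζ - τ) (hsq : c * (a ^ 2 * ζ + τ) < (a * ζ - τ) ^ 2) :
    a * c < a * ζ - τ := by
  refine lt_of_mul_lt_mul_right ?_ hpos.le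
  calc a * c * (a * ζ - τ)
      ≤ a * c * (a * ζ - τ) + (a * c * τ + c * τ) := le_add_of_nonneg_right (by positivity)
    _ = c * (a ^ 2 * ζ + τ) := by ring
    _ < (a * ζ - τ) ^ 2 := hsq
    _ = (a * ζ - τ) * (a * ζ - τ) := sq _

theorem sqrt_mul_lt_iff_sqrt_thresholdDiscrim_lt {a : ℝ} (hτ : 0 ≤ τ) (hc : 0 ≤ c) (hcζ : c < ζ)
    (ha : 0 ≤ a) :
    √(c * (a ^ 2 * ζ + τ)) < a * ζ - τ ↔ √(thresholdDiscrim τ ζ c) < a * (ζ - c) - τ := by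
  have hζ : 0 < ζ := hc.trans_lt hcζ
  constructor
  · intro h
    have hpos : 0 < a * ζ - τ := (Real.sqrt_nonneg _).trans_lt h
    have hsq : c * (a ^ 2 * ζ + τ) < (a * ζ - τ) ^ 2 := (Real.sqrt_lt' hpos).mp h
    have hpos' : 0 < a * (ζ - c) - τ := by
      linarith only [mul_lt_sub_of_mul_lt_sub_sq hτ hc ha hpos hsq]
    exact (Real.sqrt_lt' hpos').mpr ((thresholdDiscrim_lt_sq_iff hζ hcζ a).mpr hsq)
  · intro h
    have hpos' : 0 < a * (ζ - c) - τ := (Real.sqrt_nonneg _).trans_lt h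
    have hpos : 0 < a * ζ - τ := by linarith only [hpos', mul_nonneg ha hc]
    exact (Real.sqrt_lt' hpos).mpr
      ((thresholdDiscrim_lt_sq_iff hζ hcζ a).mp ((Real.sqrt_lt' hpos').mp h))

theorem lt_sqrt_mul_div_sqrt_iff {n q w x : ℝ} (hn : 0 < n) (hq : 0 ≤ q) (hw : 0 < w) :
    q < √n * x / √w ↔ √(q ^ 2 / n * w) < x := by
  rw [lt_div_iff₀ (Real.sqrt_pos.mpr hw), ← div_lt_iff₀' (Real.sqrt_pos.mpr hn),
    Real.sqrt_mul (by positivity), Real.sqrt_div (sq_nonneg q), Real.sqrt_sq hq,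
    div_mul_eq_mul_div]

theorem lt_logb_one_add_div_iff {b d m ρ : ℝ} (hb : 1 < b) (hd : 0 ≤ d) (hm : 0 < m)
    (hρ : 0 < ρ) :
    ρ < Real.logb b (1 + d / m) ↔ m < 1 / (b ^ ρ - 1) * d := by
  have hpow : 0 < b ^ ρ - 1 := sub_pos.mpr (Real.one_lt_rpow hb hρ)
  rw [Real.lt_logb_iff_rpow_lt hb (by positivity), ← sub_lt_iff_lt_add', lt_div_comm₀ hpow hm,
    one_div_mul_eq_div]

theorem lt_criticalSpectralEfficiency_iff {b ρ : ℝ} (hb : 1 < b) (hτ : 0 < τ) (hcζ : c < ζ)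
    (hρ : 0 < ρ) :
    ρ < criticalSpectralEfficiency b τ ζ c ↔
      √(thresholdDiscrim τ ζ c) < 1 / (b ^ ρ - 1) * (ζ - c) - τ := by
  rw [criticalSpectralEfficiency,
    lt_logb_one_add_div_iff hb (sub_nonneg.mpr hcζ.le) (by positivity) hρ, lt_sub_iff_add_lt']

theorem rho_star_characterization_general {b n q : ℝ} (hb : 1 < b) (hn : 0 < n) (hτ : 0 < τ)
    (hq : 0 ≤ q) (hζ : q ^ 2 / n < ζ) :
    (0 ≤ thresholdDiscrim τ ζ (q ^ 2 / n) ∧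
      0 < criticalSpectralEfficiency b τ ζ (q ^ 2 / n)) ∧
    ∀ ρ : ℝ, 0 < ρ →
      (q < √n * (1 / (b ^ ρ - 1) * ζ - τ) / √((1 / (b ^ ρ - 1)) ^ 2 * ζ + τ) ↔
        ρ < criticalSpectralEfficiency b τ ζ (q ^ 2 / n)) := by
  have hc : 0 ≤ q ^ 2 / n := by positivity
  have hζ_pos : 0 < ζ := hc.trans_lt hζ
  refine ⟨⟨thresholdDiscrim_nonneg hτ.le hc hζ, criticalSpectralEfficiency_pos hb hτ hζ⟩,
    fun ρ hρ => ?_⟩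
  have hα : 0 ≤ 1 / (b ^ ρ - 1) :=
    one_div_nonneg.mpr (sub_nonneg.mpr (Real.one_lt_rpow hb hρ).le)
  rw [lt_sqrt_mul_div_sqrt_iff hn hq (by positivity),
    sqrt_mul_lt_iff_sqrt_thresholdDiscrim_lt hτ.le hc hζ hα,
    lt_criticalSpectralEfficiency_iff hb hτ hζ hρ]

end ErrorTarget

/-- Core of Theorem 1: for finite `N`, with `ζ > q²/N`, the radicand in the
definition of `ρ*_N` is nonnegative, `ρ*_N > 0`, and for every spectral efficiency
`ρ > 0` (with `α = 1/(2^ρ − 1)`) the error-target condition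
`√N (αζ − τ)/√(α²ζ + τ) > q` holds iff `ρ < ρ*_N`. -/
theorem rho_star_characterization
    (N : ℕ) (hN : 0 < N) (τ ζ q : ℝ)
    (hτ0 : 0 < τ) (hτ1 : τ < 1) (hζ : 0 < ζ) (hq : 0 < q)
    (hζq : ζ > q ^ 2 / (N : ℝ))
    (ρstar : ℝ)
    (hρstar : ρstar = Real.logb 2 (1 + (ζ - q ^ 2 / (N : ℝ)) /
      (τ + Real.sqrt (τ ^ 2 +
        τ * (1 - q ^ 2 / ((N : ℝ) * ζ)) * (q ^ 2 / (N : ℝ) - τ))))) :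
    (0 ≤ τ ^ 2 + τ * (1 - q ^ 2 / ((N : ℝ) * ζ)) * (q ^ 2 / (N : ℝ) - τ) ∧
      0 < ρstar) ∧
    ∀ ρ : ℝ, 0 < ρ →
      (Real.sqrt N * ((1 / ((2 : ℝ) ^ ρ - 1)) * ζ - τ) /
          Real.sqrt ((1 / ((2 : ℝ) ^ ρ - 1)) ^ 2 * ζ + τ) > q ↔ ρ < ρstar) := by
  rw [hρstar, div_mul_eq_div_div]
  exact rho_star_characterization_general one_lt_two (Nat.cast_pos.mpr hN) hτ0 hq.le hζq
end

section
/- Fix α > 0, τ ∈ (0,1), ζ > 0 and β ≥ 0. There exists a constant C > 0 such that for every integer N ≥ 2, setting M = ⌈ζ·N⌉ and w(k) = (β − α·M + k)/√(α²·M + k), the following holds: | Σ_{k=0}^{N−1} C(N−1,k)·τ^k·(1−τ)^{N−1−k}·Q(w(k)) − (1/√(2π)) ∫_ℝ Q(w̃(s))·e^{−s²/2} ds | ≤ C/√N, where w̃(s) = (β − α·M + s·√((N−1)τ(1−τ)) + (N−1)τ) / √(α²·M + s·√((N−1)τ(1−τ)) + (N−1)τ), with the convention that for those s for which the radicand in the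 denominator is nonpositive the integrand value Q(w̃(s)) is taken to be Q(0) = 1/2. -/
/-- The standard Gaussian tail function `Q(x) = (1/√(2π)) ∫ₓ^∞ e^{−t²/2} dt`. -/
noncomputable def gaussQ (x : ℝ) : ℝ :=
  (Real.sqrt (2 * Real.pi))⁻¹ * ∫ t in Set.Ioi x, Real.exp (-t ^ 2 / 2)

/-
Lindeberg replacement: the binomial and the Gaussian law are `n`-fold convolution powers of a
Bernoulli and a normal law with the same first two moments, so exchanging one factor at a time
costs at most the third-order Taylor remainder of the test function. Here the test function is
`x ↦ Q(w(x))`, whose `k`-th derivative on `[0, ∞)` is `O(M ^ (-k / 2))`, and the total cost is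
`n * O(M ^ (-3 / 2)) = O(1 / √n)`. It is singular at `x = -α²M`, so it is first replaced on the
negative half-line by its quadratic Taylor polynomial at `0`. The binomial law does not see the
change, and the Gaussian law gives the negative half-line too little mass for it to matter.
-/

open MeasureTheory ProbabilityTheory Set
open scoped NNReal

section TaylorRemainder

lemma norm_le_of_norm_deriv_le_mul_abs_pow {E : Type*} [NormedAddCommGroup E] [NormedSpace ℝ E]
    {f f' : ℝ → E} {C : ℝ} {n : ℕ} (hf : ∀ t, HasDerivAt f (f' t) t) (hf0 : f 0 = 0)
    (bound : ∀ t, ‖f' t‖ ≤ C * |t| ^ n) (t : ℝ) :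
    ‖f t‖ ≤ C / (n + 1) * |t| ^ (n + 1) := by
  have of_nonneg {g g' : ℝ → E} (hg : ∀ t, HasDerivAt g (g' t) t) (hg0 : g 0 = 0)
      (hg' : ∀ t, ‖g' t‖ ≤ C * |t| ^ n) {s : ℝ} (hs : 0 ≤ s) :
      ‖g s‖ ≤ C / (n + 1) * s ^ (n + 1) := by
    have hB (x : ℝ) : HasDerivAt (fun x : ℝ ↦ C / (n + 1) * x ^ (n + 1)) (C * x ^ n) x := by
      refine ((hasDerivAt_pow (n + 1) x).const_mul (C / (n + 1))).congr_deriv ?_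
      rw [Nat.add_sub_cancel, Nat.cast_add_one, ← mul_assoc,
        div_mul_cancel₀ C n.cast_add_one_ne_zero]
    exact image_norm_le_of_norm_deriv_right_le_deriv_boundary
      (fun x _ ↦ (hg x).continuousAt.continuousWithinAt) (fun x _ ↦ (hg x).hasDerivWithinAt)
      (by simp [hg0]) hB (fun x hx ↦ by simpa [abs_of_nonneg hx.1] using hg' x) ⟨hs, le_rfl⟩
  rcases le_total 0 t with ht | ht
  · rw [abs_of_nonneg ht]
    exact of_nonneg hf hf0 bound ht
  · have reflected := of_nonneg (g := fun x ↦ f (-x)) (g' := fun x ↦ -f' (-x))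
      (fun x ↦ by simpa [Function.comp_def] using (hf (-x)).scomp x (hasDerivAt_neg x))
      (by simpa using hf0) (fun x ↦ by simpa using bound (-x)) (neg_nonneg.2 ht)
    simpa [abs_of_nonpos ht] using reflected

lemma abs_taylor_two_remainder_le {h h' h'' : ℝ → ℝ} {L : ℝ≥0}
    (hh : ∀ x, HasDerivAt h (h' x) x) (hh' : ∀ x, HasDerivAt h' (h'' x) x)
    (hL : LipschitzWith L h'') (x d : ℝ) :
    |h (x + d) - (h x + h' x * d + h'' x / 2 * d ^ 2)| ≤ L / 6 * |d| ^ 3 := by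
  have first_order (t : ℝ) : ‖h' (x + t) - (h' x + h'' x * t)‖ ≤ L / 2 * |t| ^ 2 := by
    have := norm_le_of_norm_deriv_le_mul_abs_pow (n := 1)
      (f := fun t ↦ h' (x + t) - (h' x + h'' x * t)) (f' := fun t ↦ h'' (x + t) - h'' x)
      (fun t ↦ ((hh' (x + t)).comp_const_add x t).sub
        (by simpa using ((hasDerivAt_id t).const_mul (h'' x)).const_add (h' x)))
      (by simp) (fun t ↦ by simpa using hL.norm_sub_le (x + t) x) t
    norm_num at this ⊢
    exact this
  have := norm_le_of_norm_deriv_le_mul_abs_pow (n := 2)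
    (f := fun t ↦ h (x + t) - (h x + h' x * t + h'' x / 2 * t ^ 2))
    (f' := fun t ↦ h' (x + t) - (h' x + h'' x * t))
    (fun t ↦ ((hh (x + t)).comp_const_add x t).sub (by
      refine ((((hasDerivAt_id t).const_mul (h' x)).const_add (h x)).add
        ((hasDerivAt_pow 2 t).const_mul (h'' x / 2))).congr_deriv ?_
      norm_num
      ring))
    (by simp) first_order d
  norm_num [div_div] at this ⊢
  exact this

end TaylorRemainder

section Lindeberg

variable {μ ν : Measure ℝ} [IsProbabilityMeasure μ] [IsProbabilityMeasure ν]
  {h h' h'' : ℝ → ℝ} {L : ℝ≥0}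

lemma integrable_abs_pow_three (hμ : MemLp id 3 μ) : Integrable (fun y ↦ |y| ^ 3) μ := by
  simpa using hμ.integrable_norm_pow'

lemma integrable_taylor_two (hμ : MemLp id 3 μ) (a b c : ℝ) :
    Integrable (fun y ↦ a + b * y + c * y ^ 2) μ :=
  ((integrable_const a).add ((hμ.integrable (by norm_num)).const_mul b)).add
    ((hμ.mono_exponent (by norm_num)).integrable_sq.const_mul c)

lemma integrable_comp_const_add (hμ : MemLp id 3 μ) (hh : ∀ x, HasDerivAt h (h' x) x)
    (hh' : ∀ x, HasDerivAt h' (h'' x) x) (hL : LipschitzWith L h'') (x : ℝ) :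
    Integrable (fun y ↦ h (x + y)) μ := by
  have hcont : Continuous h := continuous_iff_continuousAt.2 fun x ↦ (hh x).continuousAt
  have remainder : Integrable (fun y ↦ h (x + y) - (h x + h' x * y + h'' x / 2 * y ^ 2)) μ :=
    ((integrable_abs_pow_three hμ).const_mul (L / 6 : ℝ)).mono' (by fun_prop)
      (ae_of_all _ fun y ↦ abs_taylor_two_remainder_le hh hh' hL x y)
  simpa [Pi.add_def] using remainder.add (integrable_taylor_two hμ (h x) (h' x) (h'' x / 2))

lemma abs_integral_sub_taylor_two_le (hμ : MemLp id 3 μ) (hh : ∀ x, HasDerivAt h (h' x) x)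
    (hh' : ∀ x, HasDerivAt h' (h'' x) x) (hL : LipschitzWith L h'') (x : ℝ) :
    |∫ y, h (x + y) ∂μ - (h x + h' x * ∫ y, y ∂μ + h'' x / 2 * ∫ y, y ^ 2 ∂μ)| ≤
      L / 6 * ∫ y, |y| ^ 3 ∂μ := by
  have hid : Integrable (fun y ↦ y) μ := hμ.integrable (by norm_num)
  have hsq : Integrable (fun y ↦ y ^ 2) μ := (hμ.mono_exponent (by norm_num)).integrable_sq
  have taylor : ∫ y, (h x + h' x * y + h'' x / 2 * y ^ 2) ∂μ =
      h x + h' x * ∫ y, y ∂μ + h'' x / 2 * ∫ y, y ^ 2 ∂μ := by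
    rw [integral_add (g := fun y ↦ h'' x / 2 * y ^ 2)
      (by exact (integrable_const (h x)).add (hid.const_mul (h' x))) (hsq.const_mul _),
      integral_add (integrable_const _) (hid.const_mul _), integral_const_mul, integral_const_mul]
    simp
  rw [← taylor, ← integral_sub (integrable_comp_const_add hμ hh hh' hL x)
    (integrable_taylor_two hμ _ _ _), ← integral_const_mul, ← Real.norm_eq_abs]
  exact norm_integral_le_of_norm_le ((integrable_abs_pow_three hμ).const_mul _)
    (ae_of_all _ fun y ↦ abs_taylor_two_remainder_le hh hh' hL x y)

lemma abs_integral_sub_integral_le_of_moments_eq (hμ : MemLp id 3 μ) (hν : MemLp id 3 ν)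
    (h_mean : ∫ y, y ∂μ = ∫ y, y ∂ν) (h_sq : ∫ y, y ^ 2 ∂μ = ∫ y, y ^ 2 ∂ν)
    (hh : ∀ x, HasDerivAt h (h' x) x) (hh' : ∀ x, HasDerivAt h' (h'' x) x)
    (hL : LipschitzWith L h'') (x : ℝ) :
    |∫ y, h (x + y) ∂μ - ∫ y, h (x + y) ∂ν| ≤
      L / 6 * (∫ y, |y| ^ 3 ∂μ + ∫ y, |y| ^ 3 ∂ν) := by
  have hμT := abs_integral_sub_taylor_two_le hμ hh hh' hL x
  have hνT := abs_integral_sub_taylor_two_le hν hh hh' hL x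
  rw [h_mean, h_sq] at hμT
  rw [mul_add]
  refine (abs_sub_le _ _ _).trans (add_le_add hμT ?_)
  rwa [abs_sub_comm]

end Lindeberg

section ConvolutionPower

variable {μ ν ν' : Measure ℝ}

lemma memLp_id_conv [IsProbabilityMeasure μ] [IsProbabilityMeasure ν] {p : ENNReal}
    (hμ : MemLp id p μ) (hν : MemLp id p ν) : MemLp id p (μ ∗ ν) := by
  rw [Measure.conv, memLp_map_measure_iff (by fun_prop) (by fun_prop)]
  exact (hμ.comp_fst ν).add (hν.comp_snd μ)

lemma abs_integral_conv_sub_integral_conv_le [IsProbabilityMeasure μ] [SFinite ν] [SFinite ν']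
    {h : ℝ → ℝ} {C : ℝ} (hν : Integrable h (μ ∗ ν)) (hν' : Integrable h (μ ∗ ν'))
    (bound : ∀ x, |∫ y, h (x + y) ∂ν - ∫ y, h (x + y) ∂ν'| ≤ C) :
    |∫ x, h x ∂(μ ∗ ν) - ∫ x, h x ∂(μ ∗ ν')| ≤ C := by
  have inner_integrable {ρ : Measure ℝ} [SFinite ρ] (hρ : Integrable h (μ ∗ ρ)) :
      Integrable (fun x ↦ ∫ y, h (x + y) ∂ρ) μ :=
    (hρ.comp_measurable (measurable_fst.add measurable_snd)).integral_prod_left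
  rw [integral_conv hν, integral_conv hν',
    ← integral_sub (inner_integrable hν) (inner_integrable hν')]
  simpa using norm_integral_le_of_norm_le_const (μ := μ)
    (ae_of_all _ fun x ↦ (Real.norm_eq_abs _).trans_le (bound x))

/-- The `n`-fold convolution power of `μ`, i.e. the law of a sum of `n` independent random
variables of law `μ`. -/
noncomputable def convPow (μ : Measure ℝ) : ℕ → Measure ℝ
  | 0 => Measure.dirac 0
  | n + 1 => convPow μ n ∗ μ

instance [IsProbabilityMeasure μ] (n : ℕ) : IsProbabilityMeasure (convPow μ n) := by
  induction n with
  | zero => exact Measure.dirac.isProbabilityMeasure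
  | succ n _ => rw [convPow]; infer_instance

lemma memLp_id_convPow [IsProbabilityMeasure μ] {p : ENNReal} (hμ : MemLp id p μ) (n : ℕ) :
    MemLp id p (convPow μ n) := by
  induction n with
  | zero => exact MemLp.of_bound (by fun_prop) 0 (by simp [convPow])
  | succ n ih => exact memLp_id_conv ih hμ

lemma charFun_convPow [IsProbabilityMeasure μ] (n : ℕ) (t : ℝ) :
    charFun (convPow μ n) t = charFun μ t ^ n := by
  induction n with
  | zero => simp [convPow]
  | succ n ih => rw [convPow, charFun_conv, ih, pow_succ]

lemma convPow_gaussianReal (m : ℝ) (v : ℝ≥0) (n : ℕ) :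
    convPow (gaussianReal m v) n = gaussianReal (n * m) (n * v) := by
  induction n with
  | zero => simp [convPow]
  | succ n ih => rw [convPow, ih, gaussianReal_conv_gaussianReal]; push_cast; ring_nf

lemma convPow_bernoulliMeasure (p : unitInterval) (n : ℕ) :
    convPow Ber((1 : ℝ), 0, p) n = Bin(ℝ, n, p) := by
  refine Measure.ext_of_charFun (funext fun t ↦ ?_)
  rw [charFun_convPow, charFun_apply_real, charFun_apply_real, integral_bernoulliMeasure,
    integral_map_cast_binomial, add_pow, Nat.range_succ_eq_Iic]
  refine Finset.sum_congr rfl fun k _ ↦ ?_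
  simp only [Complex.real_smul, mul_pow, ← Complex.exp_nat_mul, Complex.ofReal_mul,
    Complex.ofReal_pow, Complex.ofReal_natCast, Complex.ofReal_one, Complex.ofReal_zero, mul_one,
    mul_zero, zero_mul, Complex.exp_zero]
  ring_nf

lemma abs_integral_convPow_sub_integral_convPow_le [IsProbabilityMeasure μ]
    [IsProbabilityMeasure ν] {h h' h'' : ℝ → ℝ} {L : ℝ≥0} (hμ : MemLp id 3 μ) (hν : MemLp id 3 ν)
    (h_mean : ∫ y, y ∂μ = ∫ y, y ∂ν) (h_sq : ∫ y, y ^ 2 ∂μ = ∫ y, y ^ 2 ∂ν)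
    (hh : ∀ x, HasDerivAt h (h' x) x) (hh' : ∀ x, HasDerivAt h' (h'' x) x)
    (hL : LipschitzWith L h'') (n : ℕ) (x : ℝ) :
    |∫ y, h (x + y) ∂convPow μ n - ∫ y, h (x + y) ∂convPow ν n| ≤
      n * (L / 6 * (∫ y, |y| ^ 3 ∂μ + ∫ y, |y| ^ 3 ∂ν)) := by
  induction n generalizing x with
  | zero => simp [convPow]
  | succ n ih =>
    have integrable {ρ : Measure ℝ} [IsProbabilityMeasure ρ] (hρ : MemLp id 3 ρ) :
        Integrable (fun y ↦ h (x + y)) ρ := integrable_comp_const_add hρ hh hh' hL x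
    have hμn := memLp_id_convPow hμ n
    have hνn := memLp_id_convPow hν n
    have replace_last :
        |∫ y, h (x + y) ∂(convPow μ n ∗ μ) - ∫ y, h (x + y) ∂(convPow μ n ∗ ν)| ≤
          L / 6 * (∫ y, |y| ^ 3 ∂μ + ∫ y, |y| ^ 3 ∂ν) :=
      abs_integral_conv_sub_integral_conv_le (integrable (memLp_id_conv hμn hμ))
        (integrable (memLp_id_conv hμn hν)) fun u ↦ by
          simpa only [add_assoc] using
            abs_integral_sub_integral_le_of_moments_eq hμ hν h_mean h_sq hh hh' hL (x + u)
    have replace_rest :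
        |∫ y, h (x + y) ∂(convPow μ n ∗ ν) - ∫ y, h (x + y) ∂(convPow ν n ∗ ν)| ≤
          n * (L / 6 * (∫ y, |y| ^ 3 ∂μ + ∫ y, |y| ^ 3 ∂ν)) := by
      rw [Measure.conv_comm _ ν, Measure.conv_comm _ ν]
      exact abs_integral_conv_sub_integral_conv_le (integrable (memLp_id_conv hν hμn))
        (integrable (memLp_id_conv hν hνn)) fun u ↦ by simpa only [add_assoc] using ih (x + u)
    rw [convPow, convPow, Nat.cast_add_one, add_one_mul, add_comm]
    exact (abs_sub_le _ _ _).trans (add_le_add replace_last replace_rest)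

end ConvolutionPower

section BinomialGaussian

variable {h h' h'' : ℝ → ℝ} {L : ℝ≥0}

lemma integral_sq_gaussianReal (m : ℝ) (v : ℝ≥0) :
    ∫ y, y ^ 2 ∂gaussianReal m v = v + m ^ 2 := by
  have := variance_eq_sub (memLp_id_gaussianReal (μ := m) (v := v) 2)
  simp only [variance_id_gaussianReal, id, Pi.pow_apply, integral_id_gaussianReal] at this
  linarith

lemma abs_integral_binomial_sub_integral_gaussianReal_le {p : unitInterval} {v : ℝ≥0}
    (hv : (v : ℝ) = p * (1 - p)) (hh : ∀ x, HasDerivAt h (h' x) x)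
    (hh' : ∀ x, HasDerivAt h' (h'' x) x) (hL : LipschitzWith L h'') (n : ℕ) :
    |∫ x, h x ∂Bin(ℝ, n, p) - ∫ x, h x ∂gaussianReal (n * p) (n * v)| ≤
      n * (L / 6 * (p + ∫ y, |y| ^ 3 ∂gaussianReal p v)) := by
  have h_bernoulli : MemLp id 3 Ber((1 : ℝ), 0, p) :=
    (integrable_norm_rpow_iff (by fun_prop) (by simp) (by simp)).1 (integrable_bernoulliMeasure ..)
  have lindeberg := abs_integral_convPow_sub_integral_convPow_le
    (ν := gaussianReal p v) h_bernoulli (memLp_id_gaussianReal 3)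
    (by simp [integral_bernoulliMeasure])
    (by rw [integral_bernoulliMeasure, integral_sq_gaussianReal, hv]; simp; ring) hh hh' hL n 0
  simpa [convPow_bernoulliMeasure, convPow_gaussianReal, integral_bernoulliMeasure] using lindeberg

end BinomialGaussian

section LeftTaylorExtension

/-- The extension of `f` from `[0, ∞)` to the real line by the quadratic polynomial with value
`f 0`, first derivative `a` and second derivative `b` at the origin. -/
noncomputable def leftTaylorExtension (f : ℝ → ℝ) (a b x : ℝ) : ℝ :=
  if 0 ≤ x then f x else f 0 + a * x + b / 2 * x ^ 2

variable {f f' : ℝ → ℝ}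

lemma leftTaylorExtension_of_nonneg {x : ℝ} (hx : 0 ≤ x) (f : ℝ → ℝ) (a b : ℝ) :
    leftTaylorExtension f a b x = f x :=
  if_pos hx

lemma leftTaylorExtension_of_nonpos {x : ℝ} (hx : x ≤ 0) (f : ℝ → ℝ) (a b : ℝ) :
    leftTaylorExtension f a b x = f 0 + a * x + b / 2 * x ^ 2 := by
  rcases hx.eq_or_lt with rfl | hx
  · simp [leftTaylorExtension]
  · exact if_neg hx.not_ge

lemma hasDerivAt_leftTaylorExtension (hf : ∀ x, 0 ≤ x → HasDerivWithinAt f (f' x) (Ici 0) x)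
    (b x : ℝ) :
    HasDerivAt (leftTaylorExtension f (f' 0) b) (leftTaylorExtension f' b 0 x) x := by
  have right : HasDerivWithinAt (leftTaylorExtension f (f' 0) b)
      (leftTaylorExtension f' b 0 x) (Ici 0) x := by
    rcases le_or_gt 0 x with hx | hx
    · rw [leftTaylorExtension_of_nonneg hx]
      exact (hf x hx).congr (fun y hy ↦ leftTaylorExtension_of_nonneg hy ..)
        (leftTaylorExtension_of_nonneg hx ..)
    · exact HasFDerivWithinAt.of_notMem_closure (by simpa using hx)
  have left : HasDerivWithinAt (leftTaylorExtension f (f' 0) b)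
      (leftTaylorExtension f' b 0 x) (Iic 0) x := by
    rcases le_or_gt x 0 with hx | hx
    · rw [leftTaylorExtension_of_nonpos hx]
      have polynomial : HasDerivAt (fun y ↦ f 0 + f' 0 * y + b / 2 * y ^ 2)
          (f' 0 + b * x + 0 / 2 * x ^ 2) x := by
        refine ((((hasDerivAt_id x).const_mul (f' 0)).const_add (f 0)).add
          ((hasDerivAt_pow 2 x).const_mul (b / 2))).congr_deriv ?_
        norm_num
        ring
      exact polynomial.hasDerivWithinAt.congr (fun y hy ↦ leftTaylorExtension_of_nonpos hy ..)
        (leftTaylorExtension_of_nonpos hx ..)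
    · exact HasFDerivWithinAt.of_notMem_closure (by simpa using hx)
  simpa using left.union right

lemma leftTaylorExtension_zero_zero (f : ℝ → ℝ) :
    leftTaylorExtension f 0 0 = fun x ↦ f (max x 0) := by
  ext x
  rcases le_total 0 x with hx | hx <;>
    simp [leftTaylorExtension_of_nonneg, leftTaylorExtension_of_nonpos, hx]

lemma lipschitzWith_leftTaylorExtension_zero_zero {L : ℝ≥0} (hf : LipschitzOnWith L f (Ici 0)) :
    LipschitzWith L (leftTaylorExtension f 0 0) := by
  rw [leftTaylorExtension_zero_zero, ← lipschitzOnWith_univ]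
  simpa only [mul_one, Function.comp_def, id] using
    hf.comp (LipschitzWith.id.max_const 0).lipschitzOnWith
      fun x _ ↦ le_max_right x 0

end LeftTaylorExtension

section GaussianTail

lemma gaussQ_eq_measureReal (x : ℝ) : gaussQ x = (gaussianReal 0 1).real (Ioi x) := by
  rw [gaussQ, measureReal_def, gaussianReal_apply_eq_integral _ one_ne_zero, ENNReal.toReal_ofReal
    (setIntegral_nonneg measurableSet_Ioi fun t _ ↦ gaussianPDFReal_nonneg 0 1 t),
    ← integral_const_mul]
  simp [gaussianPDFReal]

lemma gaussQ_mem_Icc (x : ℝ) : gaussQ x ∈ Icc 0 1 := by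
  rw [gaussQ_eq_measureReal]
  exact ⟨measureReal_nonneg, measureReal_le_one⟩

lemma gaussianPDFReal_zero_one :
    gaussianPDFReal 0 1 = fun x ↦ (√(2 * Real.pi))⁻¹ * Real.exp (-(x ^ 2 / 2)) := by
  ext x
  simp [gaussianPDFReal, neg_div]

lemma contDiff_gaussianPDFReal_zero_one {n : WithTop ℕ∞} : ContDiff ℝ n (gaussianPDFReal 0 1) := by
  rw [gaussianPDFReal_zero_one]
  fun_prop

lemma hasDerivAt_gaussQ (x : ℝ) : HasDerivAt gaussQ (-gaussianPDFReal 0 1 x) x := by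
  have h_int := integrable_gaussianPDFReal 0 1
  have split : gaussQ = fun y ↦ (∫ t in Ioi 0, gaussianPDFReal 0 1 t) -
      ∫ t in (0 : ℝ)..y, gaussianPDFReal 0 1 t := by
    ext y
    rw [← intervalIntegral.integral_Ioi_sub_Ioi' h_int.integrableOn h_int.integrableOn, gaussQ,
      ← integral_const_mul]
    simp [gaussianPDFReal]
  have h_cont := (contDiff_gaussianPDFReal_zero_one (n := 0)).continuous
  rw [split]
  exact (h_cont.integral_hasStrictDerivAt 0 x).hasDerivAt.const_sub _

lemma deriv_gaussQ : deriv gaussQ = fun x ↦ -gaussianPDFReal 0 1 x :=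
  funext fun x ↦ (hasDerivAt_gaussQ x).deriv

lemma contDiff_gaussQ {n : ℕ} : ContDiff ℝ n gaussQ := by
  refine ContDiff.of_le (contDiff_infty_iff_deriv.2 ⟨fun x ↦ ?_, ?_⟩) (by exact_mod_cast le_top)
  · exact (hasDerivAt_gaussQ x).differentiableAt
  · rw [deriv_gaussQ]
    exact contDiff_gaussianPDFReal_zero_one.neg

lemma iteratedDeriv_succ_gaussQ (n : ℕ) (x : ℝ) :
    iteratedDeriv (n + 1) gaussQ x =
      (-1) ^ (n + 1) * Polynomial.aeval x (Polynomial.hermite n) * gaussianPDFReal 0 1 x := by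
  rw [iteratedDeriv_succ', deriv_gaussQ, iteratedDeriv_fun_neg, gaussianPDFReal_zero_one,
    iteratedDeriv_const_mul_field, iteratedDeriv_eq_iterate,
    Polynomial.deriv_gaussian_eq_hermite_mul_gaussian]
  ring

lemma one_add_sq_mul_gaussianPDFReal_le_one (x : ℝ) : (1 + x ^ 2) * gaussianPDFReal 0 1 x ≤ 1 := by
  have exp_bound : (1 + x ^ 2) * Real.exp (-(x ^ 2 / 2)) ≤ 2 := by
    rw [Real.exp_neg, ← div_eq_mul_inv, div_le_iff₀ (Real.exp_pos _)]
    linarith [Real.add_one_le_exp (x ^ 2 / 2)]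
  have sqrt_bound : 2 ≤ √(2 * Real.pi) :=
    Real.le_sqrt_of_sq_le (by linarith [Real.pi_gt_three])
  calc (1 + x ^ 2) * gaussianPDFReal 0 1 x
      = (√(2 * Real.pi))⁻¹ * ((1 + x ^ 2) * Real.exp (-(x ^ 2 / 2))) := by
        rw [gaussianPDFReal_zero_one]
        ring
    _ ≤ 2⁻¹ * 2 := by gcongr
    _ = 1 := by norm_num

lemma abs_iteratedDeriv_gaussQ_le_one {n : ℕ} (hn : n ≤ 3) (x : ℝ) :
    |iteratedDeriv n gaussQ x| ≤ 1 := by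
  rcases n with _ | n
  · rw [iteratedDeriv_zero, abs_le]
    exact ⟨by linarith [(gaussQ_mem_Icc x).1], (gaussQ_mem_Icc x).2⟩
  · have hermite_bound : |Polynomial.aeval x (Polynomial.hermite n)| ≤ 1 + x ^ 2 := by
      have hn' : n ≤ 2 := by lia
      rw [abs_le]
      interval_cases n <;> simp only [Polynomial.hermite_zero, Polynomial.hermite_one,
        Polynomial.hermite_succ 1, Polynomial.derivative_X, map_sub, map_mul, map_one,
        Polynomial.aeval_X] <;>
        constructor <;> nlinarith [sq_nonneg (x - 1), sq_nonneg (x + 1)]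
    rw [iteratedDeriv_succ_gaussQ, abs_mul, abs_mul, abs_neg_one_pow, one_mul,
      abs_of_nonneg (gaussianPDFReal_nonneg 0 1 x)]
    exact (mul_le_mul_of_nonneg_right hermite_bound (gaussianPDFReal_nonneg 0 1 x)).trans
      (one_add_sq_mul_gaussianPDFReal_le_one x)

end GaussianTail

section DerivativeScaling

lemma hasDerivAt_iteratedDeriv {f : ℝ → ℝ} {n : ℕ} {x : ℝ} (hf : ContDiffAt ℝ (n + 1 : ℕ) f x) :
    HasDerivAt (iteratedDeriv n f) (iteratedDeriv (n + 1) f x) x := by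
  rw [iteratedDeriv_succ]
  refine DifferentiableAt.hasDerivAt ?_
  simpa only [iteratedDerivWithin_univ, differentiableWithinAt_univ] using
    ContDiffWithinAt.differentiableWithinAt_iteratedDerivWithin (contDiffWithinAt_univ.2 hf)
      (by exact_mod_cast n.lt_succ_self) (by simp [uniqueDiffOn_univ])

lemma abs_iteratedDeriv_comp_le {g f : ℝ → ℝ} {s : Set ℝ} {n : ℕ} {x C D : ℝ} (hs : IsOpen s)
    (hx : x ∈ s) (hg : ContDiff ℝ n g) (hf : ContDiffOn ℝ n f s)
    (hC : ∀ i ≤ n, |iteratedDeriv i g (f x)| ≤ C)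
    (hD : ∀ i, 1 ≤ i → i ≤ n → |iteratedDeriv i f x| ≤ D ^ i) :
    |iteratedDeriv n (g ∘ f) x| ≤ n.factorial * C * D ^ n := by
  have := norm_iteratedFDerivWithin_comp_le hg.contDiffOn hf le_rfl uniqueDiffOn_univ
    hs.uniqueDiffOn (mapsTo_univ f s) hx (C := C) (D := D)
  simp only [norm_iteratedFDerivWithin_eq_norm_iteratedDerivWithin, iteratedDerivWithin_univ,
    iteratedDerivWithin_of_isOpen hs hx, Real.norm_eq_abs] at this
  exact this hC hD

lemma contDiffOn_sub_const_div_sqrt (c : ℝ) (n : WithTop ℕ∞) :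
    ContDiffOn ℝ n (fun y ↦ (y - c) / √y) (Ioi 0) := fun _ hy ↦
  ((contDiffAt_id.sub contDiffAt_const).div (contDiffAt_id.sqrt (ne_of_gt hy))
    (Real.sqrt_pos.2 hy).ne').contDiffWithinAt

lemma iteratedDeriv_sub_const_div_sqrt (c : ℝ) {y : ℝ} (hy : 0 < y) (n : ℕ) :
    iteratedDeriv n (fun y ↦ (y - c) / √y) y =
      ((descPochhammer ℝ n).eval (1 / 2) * y - c * (descPochhammer ℝ n).eval (-1 / 2)) /
        (y ^ n * √y) := by
  have rpow_form : EqOn (fun y ↦ (y - c) / √y)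
      (fun y ↦ y ^ (1 / 2 : ℝ) - c * y ^ (-1 / 2 : ℝ)) (Ioi 0) := by
    intro y (hy : 0 < y)
    simp only
    rw [neg_div, Real.rpow_neg hy.le, ← Real.sqrt_eq_rpow]
    field_simp
    rw [Real.sq_sqrt hy.le]
  have smooth (r : ℝ) : ContDiffAt ℝ n (fun y : ℝ ↦ y ^ r) y :=
    Real.contDiffAt_rpow_const_of_ne hy.ne'
  rw [rpow_form.iteratedDeriv_of_isOpen isOpen_Ioi n hy,
    iteratedDeriv_fun_sub (smooth _) (contDiffAt_const.mul (smooth _)),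
    iteratedDeriv_const_mul_field, iteratedDeriv_eq_iterate, iteratedDeriv_eq_iterate,
    Real.iter_deriv_rpow_const, Real.iter_deriv_rpow_const, Real.rpow_sub_natCast hy.ne',
    Real.rpow_sub_natCast hy.ne', neg_div, Real.rpow_neg hy.le, ← Real.sqrt_eq_rpow]
  field_simp
  rw [Real.sq_sqrt hy.le]

lemma abs_descPochhammer_bounds {n : ℕ} (hn1 : 1 ≤ n) (hn3 : n ≤ 3) :
    |(descPochhammer ℝ n).eval (1 / 2)| ≤ 1 ∧ |(descPochhammer ℝ n).eval (-1 / 2)| ≤ 2 := by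
  interval_cases n <;> norm_num [descPochhammer_succ_right, abs_le]

lemma one_le_of_add_two_mul_abs_le_mul {b c S : ℝ} (hb : 0 < b) (hc : b + 2 * |c| ≤ S * b) :
    1 ≤ S :=
  le_of_mul_le_mul_right (by linarith [abs_nonneg c]) hb

/- The natural bound is `S / √b ^ (2 * n - 1)`. Multiplying it by `(S * √b) ^ (n - 1) ≥ 1` gives the
form `D ^ n` that the chain rule estimate `abs_iteratedDeriv_comp_le` asks for. -/
lemma abs_iteratedDeriv_sub_const_div_sqrt_le {b c S y : ℝ} (hb : 0 < b) (hy : b ≤ y)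
    (hc : b + 2 * |c| ≤ S * b) (hS : 1 ≤ S * √b) {n : ℕ} (hn1 : 1 ≤ n) (hn3 : n ≤ 3) :
    |iteratedDeriv n (fun y ↦ (y - c) / √y) y| ≤ (S / √b) ^ n := by
  obtain ⟨k, rfl⟩ : ∃ k, n = k + 1 := ⟨n - 1, by lia⟩
  have hy0 : 0 < y := hb.trans_le hy
  have hS1 := one_le_of_add_two_mul_abs_le_mul hb hc
  have hcy : y + 2 * |c| ≤ S * y := by nlinarith
  obtain ⟨hP, hN⟩ := abs_descPochhammer_bounds hn1 hn3
  have numerator : |(descPochhammer ℝ (k + 1)).eval (1 / 2) * y -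
      c * (descPochhammer ℝ (k + 1)).eval (-1 / 2)| ≤ S * y := by
    refine (abs_sub _ _).trans (le_trans ?_ hcy)
    rw [abs_mul, abs_mul, abs_of_pos hy0, mul_comm 2]
    gcongr
    exact mul_le_of_le_one_left hy0.le hP
  rw [iteratedDeriv_sub_const_div_sqrt c hy0, abs_div, abs_of_pos (a := y ^ (k + 1) * √y)
    (by positivity)]
  calc _ ≤ S * y / (y ^ (k + 1) * √y) := by gcongr
    _ = S / √y ^ (2 * k + 1) := by
      rw [pow_succ (√y), pow_mul, Real.sq_sqrt hy0.le]
      field_simp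
      ring
    _ ≤ S / √b ^ (2 * k + 1) := by gcongr
    _ ≤ (S * √b) ^ k * (S / √b ^ (2 * k + 1)) :=
      le_mul_of_one_le_left (by positivity) (one_le_pow₀ hS)
    _ = (S / √b) ^ (k + 1) := by
      rw [mul_pow, div_pow, pow_succ (√b), pow_succ (√b), two_mul, pow_add, pow_succ S]
      field_simp

lemma abs_iteratedDeriv_gaussQ_comp_le {b c S y : ℝ} (hb : 0 < b) (hy : b ≤ y)
    (hc : b + 2 * |c| ≤ S * b) (hS : 1 ≤ S * √b) {n : ℕ} (hn : n ≤ 3) :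
    |iteratedDeriv n (fun y ↦ gaussQ ((y - c) / √y)) y| ≤ n.factorial * (S / √b) ^ n := by
  simpa [Function.comp_def] using abs_iteratedDeriv_comp_le isOpen_Ioi (hb.trans_le hy)
    contDiff_gaussQ (contDiffOn_sub_const_div_sqrt c n)
    (fun i hi ↦ abs_iteratedDeriv_gaussQ_le_one (hi.trans hn) _) fun i hi1 hi ↦
      abs_iteratedDeriv_sub_const_div_sqrt_le hb hy hc hS hi1 (hi.trans hn)

end DerivativeScaling

section GaussianLeftTail

lemma integral_gaussianReal_eq_integral_standard {f : ℝ → ℝ} (hf : Measurable f) (m : ℝ)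
    (v : ℝ≥0) :
    ∫ x, f x ∂gaussianReal m v = ∫ z, f (m + √v * z) ∂gaussianReal 0 1 := by
  have map_eq : (gaussianReal 0 1).map (fun z ↦ m + √v * z) = gaussianReal m v := by
    rw [← Function.comp_def (m + ·) (√v * ·), ← Measure.map_map (by fun_prop) (by fun_prop),
      gaussianReal_map_const_mul, gaussianReal_map_const_add]
    congr 1 <;> simp
  rw [← map_eq, integral_map (by fun_prop) hf.aestronglyMeasurable]

lemma measurable_leftTaylorExtension {f : ℝ → ℝ} (hf : Measurable f) (a b : ℝ) :
    Measurable (leftTaylorExtension f a b) :=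
  Measurable.ite measurableSet_Ici hf (by fun_prop)

lemma abs_leftTaylorExtension_sub_le {g : ℝ → ℝ} {a b ε : ℝ} (hg : ∀ x, g x ∈ Icc 0 1)
    (ha : |a| ≤ ε) (hb : |b| ≤ 2 * ε ^ 2) (x : ℝ) :
    |leftTaylorExtension g a b x - g x| ≤ 1 + ε * |x| + (ε * |x|) ^ 2 := by
  have hε : 0 ≤ ε := (abs_nonneg a).trans ha
  rcases le_total 0 x with hx | hx
  · rw [leftTaylorExtension_of_nonneg hx, sub_self, abs_zero]
    positivity
  · have h_const : |g 0 - g x| ≤ 1 := by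
      rw [abs_le]
      constructor <;> linarith [(hg 0).1, (hg 0).2, (hg x).1, (hg x).2]
    have h_lin : |a * x| ≤ ε * |x| := by rw [abs_mul]; gcongr
    have h_quad : |b / 2 * x ^ 2| ≤ (ε * |x|) ^ 2 := by
      rw [abs_mul, abs_div, abs_two, abs_pow, mul_pow]
      gcongr
      linarith
    calc |leftTaylorExtension g a b x - g x| = |(g 0 - g x) + a * x + b / 2 * x ^ 2| := by
          rw [leftTaylorExtension_of_nonpos hx]
          ring_nf
      _ ≤ |g 0 - g x| + |a * x| + |b / 2 * x ^ 2| := abs_add_three _ _ _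
      _ ≤ 1 + ε * |x| + (ε * |x|) ^ 2 := by gcongr

/- On `m + σ * z < 0` one has `m < σ * |z|`, so a factor `σ * |z| / m ≥ 1` may be inserted. -/
lemma abs_leftTaylorExtension_affine_sub_le {g : ℝ → ℝ} {a b ε m σ K : ℝ}
    (hg : ∀ x, g x ∈ Icc 0 1) (ha : |a| ≤ ε) (hb : |b| ≤ 2 * ε ^ 2) (hm : 0 < m) (hσ : 0 ≤ σ)
    (hK : ε * σ ≤ K) (z : ℝ) :
    |leftTaylorExtension g a b (m + σ * z) - g (m + σ * z)| ≤
      σ / m * (|z| * (1 + K * |z| + (K * |z|) ^ 2)) := by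
  have hε : 0 ≤ ε := (abs_nonneg a).trans ha
  have hK0 : 0 ≤ K := (mul_nonneg hε hσ).trans hK
  rcases le_or_gt 0 (m + σ * z) with hx | hx
  · rw [leftTaylorExtension_of_nonneg hx, sub_self, abs_zero]
    positivity
  · have hσz : σ * -z ≤ σ * |z| := mul_le_mul_of_nonneg_left (neg_le_abs z) hσ
    have h_scaled : ε * |m + σ * z| ≤ K * |z| := calc
      ε * |m + σ * z| ≤ ε * (σ * |z|) := by
        gcongr
        rw [abs_of_neg hx]
        linarith
      _ ≤ K * |z| := by
        rw [← mul_assoc]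
        gcongr
    have h_one : 1 ≤ σ / m * |z| := by
      rw [div_mul_eq_mul_div, one_le_div hm]
      linarith
    calc |leftTaylorExtension g a b (m + σ * z) - g (m + σ * z)|
        ≤ 1 + ε * |m + σ * z| + (ε * |m + σ * z|) ^ 2 :=
          abs_leftTaylorExtension_sub_le hg ha hb _
      _ ≤ 1 + K * |z| + (K * |z|) ^ 2 := by gcongr
      _ ≤ σ / m * |z| * (1 + K * |z| + (K * |z|) ^ 2) :=
          le_mul_of_one_le_left (by positivity) h_one
      _ = _ := mul_assoc _ _ _

lemma abs_integral_leftTaylorExtension_sub_le {g : ℝ → ℝ} {a b ε m K : ℝ} {v : ℝ≥0}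
    (hg_meas : Measurable g) (hg : ∀ x, g x ∈ Icc 0 1) (ha : |a| ≤ ε) (hb : |b| ≤ 2 * ε ^ 2)
    (hm : 0 < m) (hK : ε * √v ≤ K) :
    |∫ x, leftTaylorExtension g a b x ∂gaussianReal m v - ∫ x, g x ∂gaussianReal m v| ≤
      √v / m * ∫ z, |z| * (1 + K * |z| + (K * |z|) ^ 2) ∂gaussianReal 0 1 := by
  have hE_meas := measurable_leftTaylorExtension hg_meas a b
  have moment (n : ℕ) : Integrable (fun z ↦ |z| ^ n) (gaussianReal 0 1) := by
    simpa using (memLp_id_gaussianReal' (μ := 0) (v := 1) n (by simp)).integrable_norm_pow'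
  have dominating : Integrable
      (fun z ↦ √v / m * (|z| * (1 + K * |z| + (K * |z|) ^ 2))) (gaussianReal 0 1) := by
    refine Integrable.const_mul ?_ _
    refine (((moment 1).add ((moment 2).const_mul K)).add
      ((moment 3).const_mul (K ^ 2))).congr (ae_of_all _ fun z ↦ ?_)
    simp only [Pi.add_apply]
    ring
  have bound (z : ℝ) := abs_leftTaylorExtension_affine_sub_le hg ha hb hm (Real.sqrt_nonneg v) hK z
  have diff_integrable : Integrable (fun z ↦ leftTaylorExtension g a b (m + √v * z) -
      g (m + √v * z)) (gaussianReal 0 1) :=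
    dominating.mono' (by fun_prop) (ae_of_all _ bound)
  have g_integrable : Integrable (fun z ↦ g (m + √v * z)) (gaussianReal 0 1) :=
    Integrable.of_mem_Icc 0 1 (by fun_prop) (ae_of_all _ fun z ↦ hg _)
  have E_integrable := diff_integrable.add g_integrable
  simp only [Pi.add_def, sub_add_cancel] at E_integrable
  rw [integral_gaussianReal_eq_integral_standard hE_meas,
    integral_gaussianReal_eq_integral_standard hg_meas, ← integral_sub E_integrable g_integrable,
    ← integral_const_mul, ← Real.norm_eq_abs]
  exact norm_integral_le_of_norm_le dominating (ae_of_all _ bound)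

end GaussianLeftTail

section SuccessProbability

/-- The conditional success probability as a function of the number `x` of other active users:
with `b = α²M` and `c = α²M + αM - β` this is `Q((β - αM + x) / √(α²M + x))`. -/
noncomputable def successProb (b c x : ℝ) : ℝ :=
  gaussQ ((b + x - c) / √(b + x))

-- For `b + x ≤ 0` the left-hand side is `gaussQ (_ / 0)`, and `_ / 0 = 0`.
lemma successProb_eq_ite (b c x : ℝ) :
    successProb b c x = if 0 < b + x then successProb b c x else gaussQ 0 := by
  split_ifs with h
  · rfl
  · rw [successProb, Real.sqrt_eq_zero_of_nonpos (not_lt.1 h), div_zero]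

lemma measurable_successProb (b c : ℝ) : Measurable (successProb b c) :=
  (contDiff_gaussQ (n := 0)).continuous.measurable.comp (by fun_prop)

variable {b c S : ℝ}

lemma hasDerivAt_iteratedDeriv_successProb (hb : 0 < b) {x : ℝ} (hx : 0 ≤ x) (n : ℕ) :
    HasDerivAt (iteratedDeriv n (successProb b c))
      (iteratedDeriv (n + 1) (successProb b c) x) x := by
  refine hasDerivAt_iteratedDeriv (contDiff_gaussQ.contDiffAt.comp x ?_)
  have h : 0 < b + x := by positivity
  exact ((contDiffOn_sub_const_div_sqrt c _).contDiffAt (Ioi_mem_nhds h)).comp x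
    (contDiffAt_const.add contDiffAt_id)

lemma abs_iteratedDeriv_successProb_le (hb : 0 < b) (hc : b + 2 * |c| ≤ S * b)
    (hS : 1 ≤ S * √b) {x : ℝ} (hx : 0 ≤ x) {n : ℕ} (hn : n ≤ 3) :
    |iteratedDeriv n (successProb b c) x| ≤ n.factorial * (S / √b) ^ n := by
  have shift := congrFun (iteratedDeriv_comp_const_add n (fun y ↦ gaussQ ((y - c) / √y)) b) x
  exact (congrArg abs shift).trans_le
    (abs_iteratedDeriv_gaussQ_comp_le hb (le_add_of_nonneg_right hx) hc hS hn)

lemma lipschitzOnWith_iteratedDeriv_two_successProb (hb : 0 < b) (hc : b + 2 * |c| ≤ S * b)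
    (hS : 1 ≤ S * √b) :
    LipschitzOnWith (6 * (S / √b) ^ 3).toNNReal (iteratedDeriv 2 (successProb b c)) (Ici 0) := by
  refine (convex_Ici 0).lipschitzOnWith_of_nnnorm_hasDerivWithin_le
    (fun x hx ↦ (hasDerivAt_iteratedDeriv_successProb hb hx 2).hasDerivWithinAt) fun x hx ↦ ?_
  rw [← NNReal.coe_le_coe, coe_nnnorm]
  exact (abs_iteratedDeriv_successProb_le hb hc hS hx le_rfl).trans (Real.le_coe_toNNReal _)

lemma integral_binomial_congr_of_nonneg {f g : ℝ → ℝ} (hfg : ∀ x, 0 ≤ x → f x = g x) (n : ℕ)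
    (p : unitInterval) : ∫ x, f x ∂Bin(ℝ, n, p) = ∫ x, g x ∂Bin(ℝ, n, p) := by
  simp only [integral_map_cast_binomial, hfg _ (Nat.cast_nonneg _)]

variable {p : unitInterval} {v : ℝ≥0}

lemma abs_integral_binomial_sub_integral_gaussianReal_extension_le
    (hv : (v : ℝ) = p * (1 - p)) (hb : 0 < b) (hc : b + 2 * |c| ≤ S * b) (hS : 1 ≤ S * √b)
    (n : ℕ) :
    |∫ x, successProb b c x ∂Bin(ℝ, n, p) -
        ∫ x, leftTaylorExtension (successProb b c) (iteratedDeriv 1 (successProb b c) 0)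
          (iteratedDeriv 2 (successProb b c) 0) x ∂gaussianReal (n * p) (n * v)| ≤
      n * ((S / √b) ^ 3 * (p + ∫ y, |y| ^ 3 ∂gaussianReal p v)) := by
  have hderiv (k : ℕ) (x : ℝ) (hx : 0 ≤ x) :=
    (hasDerivAt_iteratedDeriv_successProb (c := c) hb hx k).hasDerivWithinAt (s := Ici 0)
  have hε : 0 ≤ S / √b :=
    div_nonneg (zero_le_one.trans (one_le_of_add_two_mul_abs_le_mul hb hc)) b.sqrt_nonneg
  have key := abs_integral_binomial_sub_integral_gaussianReal_le hv
    (hasDerivAt_leftTaylorExtension (hderiv 0) (iteratedDeriv 2 (successProb b c) 0))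
    (hasDerivAt_leftTaylorExtension (hderiv 1) 0)
    (lipschitzWith_leftTaylorExtension_zero_zero
      (lipschitzOnWith_iteratedDeriv_two_successProb hb hc hS)) n
  rw [Real.coe_toNNReal _ (by positivity), mul_div_cancel_left₀ _ (by norm_num),
    iteratedDeriv_zero] at key
  rwa [integral_binomial_congr_of_nonneg fun x hx ↦ (leftTaylorExtension_of_nonneg hx ..).symm]

lemma mul_pow_three_le_div_sqrt {n ε K : ℝ} (hn : 0 < n) (hε : 0 ≤ ε) (hK : ε * √n ≤ K) :
    n * ε ^ 3 ≤ K ^ 3 / √n := by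
  rw [le_div_iff₀ (by positivity)]
  calc n * ε ^ 3 * √n = (ε * √n) ^ 3 := by
        rw [mul_pow, pow_succ (√n), Real.sq_sqrt hn.le]
        ring
    _ ≤ K ^ 3 := by gcongr

lemma abs_integral_binomial_sub_integral_gaussianReal_successProb_le {K : ℝ}
    (hv : (v : ℝ) = p * (1 - p)) (hp : 0 < (p : ℝ)) (hb : 0 < b) (hc : b + 2 * |c| ≤ S * b)
    (hS : 1 ≤ S * √b) {n : ℕ} (hn : 0 < n) (hK : S / √b * √n ≤ K) :
    |∫ x, successProb b c x ∂Bin(ℝ, n, p) -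
        ∫ x, successProb b c x ∂gaussianReal (n * p) (n * v)| ≤
      (K ^ 3 * (p + ∫ y, |y| ^ 3 ∂gaussianReal p v) +
        (∫ z, |z| * (1 + K * |z| + (K * |z|) ^ 2) ∂gaussianReal 0 1) / p) / √n := by
  have hε : 0 ≤ S / √b :=
    div_nonneg (zero_le_one.trans (one_le_of_add_two_mul_abs_le_mul hb hc)) b.sqrt_nonneg
  have hn' : 0 < (n : ℝ) := Nat.cast_pos.2 hn
  have hv1 : (v : ℝ) ≤ 1 := hv ▸ mul_le_one₀ p.2.2 (sub_nonneg.2 p.2.2) (sub_le_self 1 p.2.1)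
  have hσ : √(n * v : ℝ≥0) ≤ √n :=
    Real.sqrt_le_sqrt (by push_cast; exact mul_le_of_le_one_right hn'.le hv1)
  have replacement := abs_integral_binomial_sub_integral_gaussianReal_extension_le hv hb hc hS n
  have left_tail := abs_integral_leftTaylorExtension_sub_le (v := n * v) (K := K)
    (measurable_successProb b c) (fun x ↦ gaussQ_mem_Icc _)
    (by simpa only [Nat.factorial_one, Nat.cast_one, one_mul, pow_one] using
      abs_iteratedDeriv_successProb_le hb hc hS le_rfl (n := 1) (by norm_num))
    (abs_iteratedDeriv_successProb_le hb hc hS le_rfl (n := 2) (by norm_num))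
    (mul_pos hn' hp) ((mul_le_mul_of_nonneg_left hσ hε).trans hK)
  have left_tail_rate : √(n * v : ℝ≥0) / (n * p) ≤ 1 / p / √n := calc
    √(n * v : ℝ≥0) / (n * p) ≤ √n / (n * p) := by gcongr
    _ = √n / n / p := div_mul_eq_div_div _ _ _
    _ = 1 / p / √n := by rw [Real.sqrt_div_self', div_right_comm]
  have hK0 : 0 ≤ K := (by positivity : 0 ≤ S / √b * √n).trans hK
  have replacement_rate := mul_pow_three_le_div_sqrt hn' hε hK
  have third_moment : 0 ≤ p + ∫ y, |y| ^ 3 ∂gaussianReal p v := by positivity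
  rw [← mul_assoc] at replacement
  calc _ ≤ _ := (abs_sub_le _ _ _).trans (add_le_add replacement left_tail)
    _ ≤ K ^ 3 / √n * (p + ∫ y, |y| ^ 3 ∂gaussianReal p v) +
        1 / p / √n * ∫ z, |z| * (1 + K * |z| + (K * |z|) ^ 2) ∂gaussianReal 0 1 := by gcongr
    _ = _ := by ring

lemma exists_abs_integral_binomial_sub_integral_gaussianReal_successProb_le {δ κ : ℝ}
    (hv : (v : ℝ) = p * (1 - p)) (hp : 0 < (p : ℝ)) (hδ : 0 < δ) :
    ∃ K : ℝ, 0 < K ∧ ∀ n : ℕ, 0 < n → ∀ b c : ℝ, δ * n ≤ b → |c| ≤ κ * b →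
      |∫ x, successProb b c x ∂Bin(ℝ, n, p) -
          ∫ x, successProb b c x ∂gaussianReal (n * p) (n * v)| ≤ K / √n := by
  let S : ℝ := 1 + 2 * |κ| + 1 / √δ
  let K : ℝ := S / √δ
  refine ⟨K ^ 3 * (p + ∫ y, |y| ^ 3 ∂gaussianReal p v) +
    (∫ z, |z| * (1 + K * |z| + (K * |z|) ^ 2) ∂gaussianReal 0 1) / p, by positivity, ?_⟩
  intro n hn b c hδb hcb
  have hn1 : (1 : ℝ) ≤ n := Nat.one_le_cast.2 hn
  have hδ_le : δ ≤ b := (le_mul_of_one_le_right hδ.le hn1).trans hδb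
  have hb : 0 < b := hδ.trans_le hδ_le
  have hSc : b + 2 * |c| ≤ S * b := calc
    b + 2 * |c| ≤ b + 2 * (|κ| * b) := by
      gcongr
      exact hcb.trans (by gcongr; exact le_abs_self κ)
    _ = (1 + 2 * |κ|) * b := by ring
    _ ≤ S * b := mul_le_mul_of_nonneg_right (le_add_of_nonneg_right (by positivity)) hb.le
  have hSb : 1 ≤ S * √b := calc
    1 = 1 / √δ * √δ := by field_simp
    _ ≤ S * √b := by
      gcongr
      exact le_add_of_nonneg_left (by positivity)
  have hKn : S / √b * √n ≤ K := by
    rw [div_mul_eq_mul_div, div_le_div_iff₀ (by positivity) (by positivity), mul_assoc,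
      ← Real.sqrt_mul (Nat.cast_nonneg n), mul_comm (n : ℝ)]
    gcongr
  exact abs_integral_binomial_sub_integral_gaussianReal_successProb_le hv hp hb hSc hSb hn hKn

end SuccessProbability

lemma sum_choose_mul_eq_integral_binomial (n : ℕ) (p : unitInterval) (f : ℝ → ℝ) :
    ∑ k ∈ Finset.range (n + 1), (n.choose k : ℝ) * p ^ k * (1 - p) ^ (n - k) * f k =
      ∫ x, f x ∂Bin(ℝ, n, p) := by
  simp only [integral_map_cast_binomial, Nat.range_succ_eq_Iic, smul_eq_mul]

lemma inv_sqrt_two_pi_mul_integral_eq_integral_gaussianReal (f : ℝ → ℝ) :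
    (√(2 * Real.pi))⁻¹ * ∫ s, f s * Real.exp (-s ^ 2 / 2) = ∫ s, f s ∂gaussianReal 0 1 := by
  rw [integral_gaussianReal_eq_integral_smul one_ne_zero, ← integral_const_mul]
  congr 1 with s
  simp only [gaussianPDFReal, NNReal.coe_one, mul_one, sub_zero, smul_eq_mul]
  ring

lemma integral_ite_successProb_eq_integral_gaussianReal (b c m : ℝ) (v : ℝ≥0) :
    (√(2 * Real.pi))⁻¹ * ∫ s, (if 0 < b + (s * √v + m) then successProb b c (s * √v + m)
        else gaussQ 0) * Real.exp (-s ^ 2 / 2) =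
      ∫ x, successProb b c x ∂gaussianReal m v := by
  simp only [← successProb_eq_ite]
  rw [inv_sqrt_two_pi_mul_integral_eq_integral_gaussianReal
      (fun s ↦ successProb b c (s * √v + m)),
    integral_gaussianReal_eq_integral_standard (measurable_successProb b c)]
  simp only [mul_comm, add_comm]

lemma inv_sqrt_le_sqrt_two_div_sqrt_succ {n : ℕ} (hn : 0 < n) :
    (√n)⁻¹ ≤ √2 / √(n + 1) := by
  have hn' : (1 : ℝ) ≤ n := Nat.one_le_cast.2 hn
  rw [inv_eq_one_div, div_le_div_iff₀ (by positivity) (by positivity), one_mul,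
    ← Real.sqrt_mul zero_le_two]
  exact Real.sqrt_le_sqrt (by linarith)

lemma successProb_system (α β M x : ℝ) :
    successProb (α ^ 2 * M) (α ^ 2 * M + α * M - β) x =
      gaussQ ((β - α * M + x) / √(α ^ 2 * M + x)) := by
  rw [successProb]
  congr 2
  ring

lemma abs_sq_mul_add_mul_sub_le {α ζ β M : ℝ} (hα : α ≠ 0) (hζ : 0 < ζ) (hM : ζ ≤ M) :
    |α ^ 2 * M + α * M - β| ≤ (1 + 1 / |α| + |β| / (α ^ 2 * ζ)) * (α ^ 2 * M) := by
  have hM0 : 0 < M := hζ.trans_le hM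
  have hβ : |β| ≤ |β| / (α ^ 2 * ζ) * (α ^ 2 * M) := by
    rw [div_mul_eq_mul_div, le_div_iff₀ (by positivity)]
    gcongr
  have hα' : 1 / |α| * (α ^ 2 * M) = |α| * M := by
    rw [← sq_abs]
    field_simp
  calc |α ^ 2 * M + α * M - β| ≤ |α ^ 2 * M| + |α * M| + |β| :=
        (abs_sub _ _).trans (add_le_add_left (abs_add_le _ _) _)
    _ = α ^ 2 * M + |α| * M + |β| := by
        rw [abs_of_pos (by positivity : 0 < α ^ 2 * M), abs_mul, abs_of_pos hM0]
    _ ≤ (1 + 1 / |α| + |β| / (α ^ 2 * ζ)) * (α ^ 2 * M) := by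
        rw [add_mul, add_mul, one_mul, hα']
        gcongr

theorem binomial_average_gaussian_approximation_general
    (α τ ζ β : ℝ) (hα : α ≠ 0) (hτ0 : 0 < τ) (hτ1 : τ ≤ 1) (hζ : 0 < ζ) :
    ∃ K : ℝ, 0 < K ∧ ∀ N : ℕ, 2 ≤ N → ∀ M : ℝ, ζ * N ≤ M →
      |(∑ k ∈ Finset.range N, ((N - 1).choose k : ℝ) * τ ^ k * (1 - τ) ^ (N - 1 - k) *
            gaussQ ((β - α * M + k) / √(α ^ 2 * M + k))) -
          (√(2 * Real.pi))⁻¹ *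
            ∫ s : ℝ,
              (if 0 < α ^ 2 * M + s * √((N - 1) * τ * (1 - τ)) + (N - 1) * τ then
                gaussQ ((β - α * M + s * √((N - 1) * τ * (1 - τ)) + (N - 1) * τ) /
                  √(α ^ 2 * M + s * √((N - 1) * τ * (1 - τ)) + (N - 1) * τ))
              else gaussQ 0) * Real.exp (-s ^ 2 / 2)| ≤ K / √N := by
  let p : unitInterval := ⟨τ, hτ0.le, hτ1⟩
  let v : ℝ≥0 := ⟨τ * (1 - τ), mul_nonneg hτ0.le (sub_nonneg.2 hτ1)⟩
  obtain ⟨K, hK, bound⟩ :=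
    exists_abs_integral_binomial_sub_integral_gaussianReal_successProb_le (p := p) (v := v)
      (δ := α ^ 2 * ζ) (κ := 1 + 1 / |α| + |β| / (α ^ 2 * ζ)) rfl hτ0 (by positivity)
  refine ⟨K * √2, by positivity, fun N hN M hM ↦ ?_⟩
  obtain ⟨n, rfl⟩ : ∃ n, N = n + 1 := ⟨N - 1, by omega⟩
  rw [Nat.cast_add_one] at hM
  have hn : 0 < n := by omega
  have hb : α ^ 2 * ζ * n ≤ α ^ 2 * M := by
    rw [mul_assoc]
    gcongr
    exact (mul_le_mul_of_nonneg_left (le_add_of_nonneg_right zero_le_one) hζ.le).trans hM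
  have hc := abs_sq_mul_add_mul_sub_le (β := β) hα hζ
    ((le_mul_of_one_le_right hζ.le (le_add_of_nonneg_left n.cast_nonneg)).trans hM)
  have key := bound n hn _ _ hb hc
  rw [← sum_choose_mul_eq_integral_binomial,
    ← integral_ite_successProb_eq_integral_gaussianReal] at key
  have variance : ((n * v : ℝ≥0) : ℝ) = n * τ * (1 - τ) := (mul_assoc _ _ _).symm
  simp only [successProb_system, variance, ← add_assoc, p] at key
  simp only [Nat.add_sub_cancel, Nat.cast_add_one, add_sub_cancel_right]
  refine key.trans ?_
  rw [div_eq_mul_inv, mul_div_assoc]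
  gcongr
  exact inv_sqrt_le_sqrt_two_div_sqrt_succ hn

/-- Lemma 2: the Binomial(N−1, τ) average of `Q(w(k))`, with
`w(k) = (β − αM + k)/√(α²M + k)` and `M = ⌈ζN⌉`, equals its Gaussian-mixture
approximation (via the substitution `k = (N−1)τ + s√((N−1)τ(1−τ))`) up to an
error of order `1/√N`; for `s` making the radicand in the denominator
nonpositive the integrand is taken to be `Q(0) = 1/2`. -/
theorem binomial_average_gaussian_approximation
    (α τ ζ β : ℝ) (hα : 0 < α) (hτ0 : 0 < τ) (hτ1 : τ < 1) (hζ : 0 < ζ)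
    (hβ : 0 ≤ β) :
    ∃ K : ℝ, 0 < K ∧ ∀ N : ℕ, 2 ≤ N → ∀ M : ℕ, M = Nat.ceil (ζ * (N : ℝ)) →
      |(∑ k ∈ Finset.range N, ((N - 1).choose k : ℝ) * τ ^ k *
            (1 - τ) ^ (N - 1 - k) *
            gaussQ ((β - α * (M : ℝ) + (k : ℝ)) /
              Real.sqrt (α ^ 2 * (M : ℝ) + (k : ℝ)))) -
          (Real.sqrt (2 * Real.pi))⁻¹ *
            ∫ s : ℝ,
              (if 0 < α ^ 2 * (M : ℝ) +
                    s * Real.sqrt (((N : ℝ) - 1) * τ * (1 - τ)) +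
                    ((N : ℝ) - 1) * τ then
                gaussQ ((β - α * (M : ℝ) +
                    s * Real.sqrt (((N : ℝ) - 1) * τ * (1 - τ)) +
                    ((N : ℝ) - 1) * τ) /
                  Real.sqrt (α ^ 2 * (M : ℝ) +
                    s * Real.sqrt (((N : ℝ) - 1) * τ * (1 - τ)) +
                    ((N : ℝ) - 1) * τ))
              else gaussQ 0) * Real.exp (-s ^ 2 / 2)|
        ≤ K / Real.sqrt N := by
  obtain ⟨K, hK, bound⟩ :=
    binomial_average_gaussian_approximation_general α τ ζ β hα.ne' hτ0 hτ1.le hζ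
  exact ⟨K, hK, fun N hN M hM ↦ bound N hN M (hM ▸ Nat.le_ceil _)⟩
end
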